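/- arXiv:2303.11970 — 4 statements merged into one kernel-verified Lean document; each statement's English description precedes it below -/
import Mathlib

section
/- Let M : [0,∞) → ℝ^{n×n} be continuous, let P ∈ ℝ^{n×n} be symmetric, and let λ ≥ 0, σ > 0 be such that PM(t) + M(t)ᵀP ⪯ -2λP - σIₙ for all t ≥ 0. If v : [0,∞) → ℝⁿ is continuously differentiable with v̇(t) = M(t)v(t) for all t ≥ 0, v(0) ≠ 0, and v(0)ᵀPv(0) ≤ 0, then v(t)ᵀPv(t) < 0 for all t > 0. -/
/-!
Put `f t = v(t)ᵀ P v(t)` and `g t = exp (2 λ t) f t`. Evaluating the matrix inequality at `v t`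
gives `f' ≤ -2 λ f - σ |v|²`, hence `g' ≤ -σ exp (2 λ t) |v|² ≤ 0`, so `g` is nonincreasing on
`[0,∞)` and `g t ≤ g 0 ≤ 0`. If `g t` were nonnegative for some `t > 0`, then `g` would vanish on
`[0,t]`, forcing `g' 0 = 0`; but `g' 0 ≤ -σ |v 0|² < 0` because `v 0 ≠ 0`. Strictness is thus
decided at time `0` alone, and uniqueness of solutions of the equation plays no role.
-/

open Matrix

theorem hasDerivAt_quadForm {n : ℕ} (P : Matrix (Fin n) (Fin n) ℝ) {v : ℝ → Fin n → ℝ}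
    {w : Fin n → ℝ} {t : ℝ} (h : HasDerivAt v w t) :
    HasDerivAt (fun s => v s ⬝ᵥ (P *ᵥ v s)) (w ⬝ᵥ (P *ᵥ v t) + v t ⬝ᵥ (P *ᵥ w)) t := by
  have hc := hasDerivAt_pi.1 h
  have hP : ∀ i, HasDerivAt (fun s => (P *ᵥ v s) i) ((P *ᵥ w) i) t := fun i => by
    simp only [Matrix.mulVec, dotProduct]
    exact HasDerivAt.fun_sum fun j _ => (hc j).const_mul (P i j)
  simp only [dotProduct, ← Finset.sum_add_distrib]
  exact HasDerivAt.fun_sum fun i _ => (hc i).mul (hP i)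

/-- The matrix inequality evaluated at a vector `x`: the derivative of the quadratic form of `P`
along the field `A x` is at most `-2 l xᵀ P x - s |x|²`. -/
theorem quadForm_deriv_le {n : ℕ} {A P : Matrix (Fin n) (Fin n) ℝ} {l s : ℝ}
    (h : ((-(2 * l)) • P - s • (1 : Matrix (Fin n) (Fin n) ℝ) - (P * A + Aᵀ * P)).PosSemidef)
    (x : Fin n → ℝ) :
    (A *ᵥ x) ⬝ᵥ (P *ᵥ x) + x ⬝ᵥ (P *ᵥ (A *ᵥ x)) ≤
      -(2 * l) * (x ⬝ᵥ (P *ᵥ x)) - s * (x ⬝ᵥ x) := by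
  have h1 := h.dotProduct_mulVec_nonneg x
  have h2 : (A *ᵥ x) ⬝ᵥ (P *ᵥ x) = x ⬝ᵥ ((Aᵀ * P) *ᵥ x) := by
    rw [← Matrix.mulVec_mulVec, Matrix.dotProduct_mulVec x, Matrix.vecMul_transpose]
  simp only [star_trivial, Matrix.sub_mulVec, Matrix.add_mulVec, Matrix.smul_mulVec,
    Matrix.one_mulVec, dotProduct_sub, dotProduct_add, dotProduct_smul, smul_eq_mul, ← h2,
    ← Matrix.mulVec_mulVec x P A] at h1
  linarith

/-- (LTV version of strong monotonicity w.r.t. `C_P⁻`.)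
If `M : [0,∞) → ℝ^{n×n}` is continuous, `P` symmetric, `λ ≥ 0`, `σ > 0` with
`P M(t) + M(t)ᵀ P ⪯ -2λP - σI` for all `t ≥ 0`, and `v` is a C¹ solution of `v̇ = M(t) v`
with `v(0) ≠ 0` and `v(0)ᵀ P v(0) ≤ 0`, then `v(t)ᵀ P v(t) < 0` for all `t > 0`. -/
theorem ltv_lmi_implies_strong_monotonicity
    {n : ℕ} (M : ℝ → Matrix (Fin n) (Fin n) ℝ) (P : Matrix (Fin n) (Fin n) ℝ)
    (hP : P.IsSymm)
    (hMcont : ContinuousOn M (Set.Ici (0 : ℝ)))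
    (lam σ : ℝ) (hlam : 0 ≤ lam) (hσ : 0 < σ)
    (hLMI : ∀ t : ℝ, 0 ≤ t →
      ((-(2 * lam)) • P - σ • (1 : Matrix (Fin n) (Fin n) ℝ)
        - (P * M t + (M t)ᵀ * P)).PosSemidef)
    (v : ℝ → Fin n → ℝ)
    (hv : ∀ t : ℝ, 0 ≤ t → HasDerivAt v (M t *ᵥ v t) t)
    (hv0 : v 0 ≠ 0)
    (hv0P : v 0 ⬝ᵥ (P *ᵥ v 0) ≤ 0) :
    ∀ t : ℝ, 0 < t → v t ⬝ᵥ (P *ᵥ v t) < 0 := by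
  intro t ht
  set f : ℝ → ℝ := fun s => v s ⬝ᵥ (P *ᵥ v s) with hf
  set f' : ℝ → ℝ := fun s => (M s *ᵥ v s) ⬝ᵥ (P *ᵥ v s) + v s ⬝ᵥ (P *ᵥ (M s *ᵥ v s)) with hf'
  have hle : ∀ s, 0 ≤ s → f' s + 2 * lam * f s ≤ -(σ * (v s ⬝ᵥ v s)) := fun s hs => by
    have := quadForm_deriv_le (hLMI s hs) (v s)
    simp only [hf, hf']
    linarith
  have hnn : ∀ s, 0 ≤ v s ⬝ᵥ v s := fun s => Finset.sum_nonneg fun i _ => mul_self_nonneg _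
  set g : ℝ → ℝ := fun s => Real.exp (2 * lam * s) * f s with hg
  have hgd : ∀ s, 0 ≤ s →
      HasDerivAt g (Real.exp (2 * lam * s) * (f' s + 2 * lam * f s)) s := fun s hs => by
    have he : HasDerivAt (fun s => Real.exp (2 * lam * s))
        (Real.exp (2 * lam * s) * (2 * lam * 1)) s :=
      ((hasDerivAt_id s).const_mul (2 * lam)).exp
    refine (he.mul (hasDerivAt_quadForm P (hv s hs))).congr_deriv ?_
    simp only [hf, hf']
    ring
  have hanti : AntitoneOn g (Set.Ici 0) := by
    refine antitoneOn_of_deriv_nonpos (convex_Ici 0)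
      (fun s hs => (hgd s hs).continuousAt.continuousWithinAt) ?_ ?_
    · intro s hs
      exact (hgd s (interior_subset hs)).differentiableAt.differentiableWithinAt
    · intro s hs
      have hs' : 0 ≤ s := interior_subset hs
      rw [(hgd s hs').deriv]
      have := mul_nonneg hσ.le (hnn s)
      exact mul_nonpos_of_nonneg_of_nonpos (Real.exp_pos _).le ((hle s hs').trans (by linarith))
  by_contra! hcon
  have hgt : 0 ≤ g t := mul_nonneg (Real.exp_pos _).le hcon
  have hg0 : g 0 ≤ 0 := by simpa [hg, hf] using hv0P
  have hzero : ∀ s ∈ Set.Icc 0 t, g s = 0 := fun s hs =>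
    le_antisymm ((hanti Set.self_mem_Ici hs.1 hs.1).trans hg0)
      (hgt.trans (hanti hs.1 ht.le hs.2))
  have h0 : (0 : ℝ) ∈ Set.Icc 0 t := ⟨le_rfl, ht.le⟩
  have hd0 : HasDerivWithinAt g 0 (Set.Icc 0 t) 0 :=
    (hasDerivWithinAt_const 0 _ (0 : ℝ)).congr hzero (hzero 0 h0)
  have heq := (uniqueDiffOn_Icc ht 0 h0).eq_deriv _ (hgd 0 le_rfl).hasDerivWithinAt hd0
  have hpos : 0 < v 0 ⬝ᵥ v 0 :=
    lt_of_le_of_ne (hnn 0) fun h => hv0 (dotProduct_self_eq_zero.1 h.symm)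
  have := mul_pos hσ hpos
  have := hle 0 le_rfl
  simp only [mul_zero, Real.exp_zero, one_mul] at heq
  linarith
end

section
/- Let ε > 0, let A : [0,∞) → ℝ^{n_r×n_r}, B : [0,∞) → ℝ^{n_r×n_f}, C : [0,∞) → ℝ^{n_f×n_r}, D : [0,∞) → ℝ^{n_f×n_f} be continuous, and let L : [0,∞) → ℝ^{n_f×n_r} and H : [0,∞) → ℝ^{n_r×n_f} be continuously differentiable functions satisfying εL̇ = DL - C - εL(A - BL) and -εḢ = HD - B + εHLB - ε(A - BL)H on [0,∞). Suppose ξ : [0,∞) → ℝ^{n_r} and η : [0,∞) → ℝ^{n_f} are continuously differentiable and satisfy the decoupled system ξ̇ = (A(t) - B(t)L(t))ξ and εη̇ = (D(t) + εL(t)B(t))η. Define x(t) := ξ(t) + εH(t)η(t) and z(t) := -L(t)ξ(t) + (I_{n_f} - εL(t)H(t))η(t). Then (x, z) solves the singularly perturbed system ẋ = A(t)x + B(t)z, εż = C(t)x + D(t)z on [0,∞). -/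
open Matrix

/-!
The transformation is the composite of two triangular substitutions: `x = ξ + εHη` and
`z = η - Lx`. Differentiating the first with the product rule, the equation for `H` removes
`εH'`, and what is left is `Ax + Bz`. Differentiating the second and inserting `ẋ = Ax + Bz`,
the equation for `L` removes `εL'`, and what is left is `ε⁻¹(Cx + Dz)`. The only analytic
ingredient is the product rule for matrix-vector products, `hasDerivAt_mulVec`.
-/

/-- Product rule for a matrix-vector product, the matrix being differentiated entrywise. -/
theorem hasDerivAt_mulVec {m n : ℕ} {M : ℝ → Matrix (Fin m) (Fin n) ℝ}
    {M' : Matrix (Fin m) (Fin n) ℝ} {v : ℝ → Fin n → ℝ} {v' : Fin n → ℝ} {t : ℝ}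
    (hM : ∀ i j, HasDerivAt (fun s => M s i j) (M' i j) t) (hv : HasDerivAt v v' t) :
    HasDerivAt (fun s => M s *ᵥ v s) (M' *ᵥ v t + M t *ᵥ v') t := by
  rw [hasDerivAt_pi] at hv ⊢
  intro i
  have h := HasDerivAt.fun_sum (u := Finset.univ) fun j _ => (hM i j).fun_mul (hv j)
  simpa only [Matrix.mulVec, dotProduct, Pi.add_apply, ← Finset.sum_add_distrib] using h

/-- If `L, H` solve the Chang differential equations and `(ξ, η)` solves the
decoupled system `ξ̇ = (A - BL)ξ`, `εη̇ = (D + εLB)η`, then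
`x := ξ + εHη`, `z := -Lξ + (I - εLH)η` solves the singularly perturbed system
`ẋ = A(t)x + B(t)z`, `εż = C(t)x + D(t)z` on `[0,∞)`. -/
theorem chang_transformation_decouples
    {nr nf : ℕ} (ε : ℝ) (hε : 0 < ε)
    (A : ℝ → Matrix (Fin nr) (Fin nr) ℝ) (B : ℝ → Matrix (Fin nr) (Fin nf) ℝ)
    (C : ℝ → Matrix (Fin nf) (Fin nr) ℝ) (D : ℝ → Matrix (Fin nf) (Fin nf) ℝ)
    (hA : ContinuousOn A (Set.Ici (0 : ℝ))) (hB : ContinuousOn B (Set.Ici (0 : ℝ)))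
    (hC : ContinuousOn C (Set.Ici (0 : ℝ))) (hD : ContinuousOn D (Set.Ici (0 : ℝ)))
    (L L' : ℝ → Matrix (Fin nf) (Fin nr) ℝ)
    (hL : ∀ t ∈ Set.Ici (0 : ℝ), ∀ i j, HasDerivAt (fun s => L s i j) (L' t i j) t)
    (hL'cont : ContinuousOn L' (Set.Ici (0 : ℝ)))
    (hLeq : ∀ t ∈ Set.Ici (0 : ℝ),
      ε • L' t = D t * L t - C t - ε • (L t * (A t - B t * L t)))
    (H H' : ℝ → Matrix (Fin nr) (Fin nf) ℝ)
    (hH : ∀ t ∈ Set.Ici (0 : ℝ), ∀ i j, HasDerivAt (fun s => H s i j) (H' t i j) t)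
    (hH'cont : ContinuousOn H' (Set.Ici (0 : ℝ)))
    (hHeq : ∀ t ∈ Set.Ici (0 : ℝ),
      -(ε • H' t) = H t * D t - B t + ε • (H t * (L t * B t)) - ε • ((A t - B t * L t) * H t))
    (ξ : ℝ → Fin nr → ℝ) (η : ℝ → Fin nf → ℝ)
    (hξ : ∀ t ∈ Set.Ici (0 : ℝ), HasDerivAt ξ ((A t - B t * L t) *ᵥ ξ t) t)
    (hη : ∀ t ∈ Set.Ici (0 : ℝ),
      HasDerivAt η (ε⁻¹ • ((D t + ε • (L t * B t)) *ᵥ η t)) t)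
    (x : ℝ → Fin nr → ℝ) (z : ℝ → Fin nf → ℝ)
    (hx : ∀ t : ℝ, x t = ξ t + ε • (H t *ᵥ η t))
    (hz : ∀ t : ℝ, z t = -(L t *ᵥ ξ t) + η t - ε • (L t *ᵥ (H t *ᵥ η t))) :
    ∀ t ∈ Set.Ici (0 : ℝ),
      HasDerivAt x (A t *ᵥ x t + B t *ᵥ z t) t ∧
      HasDerivAt z (ε⁻¹ • (C t *ᵥ x t + D t *ᵥ z t)) t := by
  intro t ht
  have hε0 : ε ≠ 0 := hε.ne'
  have hzx : ∀ s, z s = η s - L s *ᵥ x s := fun s => by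
    rw [hz, hx, mulVec_add, mulVec_smul]
    module
  have hxd : HasDerivAt x (A t *ᵥ x t + B t *ᵥ z t) t := by
    have hd := (hξ t ht).fun_add ((hasDerivAt_mulVec (hH t ht) (hη t ht)).fun_const_smul ε)
    rw [funext hx]
    refine hd.congr_deriv ?_
    have key := congrArg (· *ᵥ η t) (hHeq t ht)
    simp only [neg_mulVec, add_mulVec, sub_mulVec, smul_mulVec, ← mulVec_mulVec] at key
    simp only [hz, mulVec_add, mulVec_sub, mulVec_neg, mulVec_smul, add_mulVec, sub_mulVec,
      smul_mulVec, ← mulVec_mulVec, smul_add, smul_inv_smul₀ hε0]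
    linear_combination (norm := module) -key
  refine ⟨hxd, ?_⟩
  have hd := (hη t ht).fun_sub (hasDerivAt_mulVec (hL t ht) hxd)
  rw [funext hzx]
  refine hd.congr_deriv ?_
  have key := congrArg (· *ᵥ x t) (hLeq t ht)
  simp only [sub_mulVec, smul_mulVec, ← mulVec_mulVec] at key
  -- Multiply the claimed identity by `ε`, so that `εL'` appears and `key` can replace it.
  rw [eq_comm, inv_smul_eq_iff₀ hε0, smul_sub, smul_inv_smul₀ hε0, smul_add, key]
  simp only [hzx, mulVec_add, mulVec_sub, add_mulVec, smul_mulVec, ← mulVec_mulVec]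
  module
end

section
/- Consider the singularly perturbed linear time-invariant system ẋ = Ax + Bz, εż = Cx + Dz with A ∈ ℝ^{n_r×n_r}, B ∈ ℝ^{n_r×n_f}, C ∈ ℝ^{n_f×n_r}, D ∈ ℝ^{n_f×n_f}, D invertible, and A₀ := A - BD⁻¹C. Suppose there exist symmetric matrices P_r ∈ ℝ^{n_r×n_r} with inertia In(P_r) = (p, 0, n_r - p) and P_f ∈ ℝ^{n_f×n_f} with In(P_f) = (0, 0, n_f), rates λ_r, λ_f ≥ 0, and σ_r, σ_f > 0 such that P_r A₀ + A₀ᵀP_r ⪯ -2λ_r P_r - σ_r I_{n_r} and P_f D + DᵀP_f ⪯ -2λ_f P_f - σ_f I_{n_f}. Then there exist ε* > 0 and σ > 0 such that for every ε ∈ (0, ε*) there exists L ∈ ℝ^{n_f×n_r} with DL - C - εL(A - BL) = 0, P_r(A - BL) + (A - BL)ᵀP_r ⪯ -2λ_r P_r - σ I_{n_r}, and P_f(ε⁻¹D + LB) + (ε⁻¹D + LB)ᵀP_f ⪯ -2λ_r P_f - σ I_{n_f}. -/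
open Matrix

/-!
The decoupling equation `D L - C - ε L (A - B L) = 0` has the solution `L₀ = D⁻¹ C` at `ε = 0`, and
the derivative of its left-hand side in `L` at that point is `H ↦ D H`, which is onto. Hence
`(ε, L) ↦ (ε, D L - C - ε L (A - B L))` is open at `(0, L₀)`, so any property which holds for all
`(ε, L)` near `(0, L₀)` holds for some genuine solution `L` whenever `ε` is small
(`exists_solution_near`).

Both matrix inequalities are such properties. With margin `σ = σr / 2`, the slow one at `L` is the
hypothesis plus `σ I` plus a symmetric perturbation vanishing at `L₀`. The fast one, multiplied by
`ε`, is the hypothesis plus `2 lamf Pf ⪰ 0` plus `σf I` plus a symmetric perturbation vanishing at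
`ε = 0`. A positive multiple of the identity absorbs small symmetric perturbations
(`eventually_posSemidef`).
-/

section Perturbation

/-- A symmetric perturbation tending to zero is eventually absorbed by a positive multiple of the
identity. -/
lemma eventually_posSemidef {X : Type*} {n : ℕ} {l : Filter X}
    (E : X → Matrix (Fin n) (Fin n) ℝ) (hE : ∀ x, (E x)ᵀ = E x)
    (hl : Filter.Tendsto E l (nhds 0)) {s : ℝ} (hs : 0 < s) :
    ∀ᶠ x in l, (s • (1 : Matrix (Fin n) (Fin n) ℝ) + E x).PosSemidef := by
  have hδ : 0 < s / (n + 1) := by positivity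
  have hent : ∀ᶠ x in l, ∀ i j, |E x i j| < s / (n + 1) := by
    simp only [Filter.eventually_all]
    intro i j
    have h1 : Filter.Tendsto (fun x => |E x i j|) l (nhds 0) := by
      have := (tendsto_pi_nhds.1 (tendsto_pi_nhds.1 hl i) j).abs
      simpa using this
    exact h1.eventually_lt_const hδ
  filter_upwards [hent] with x hx
  refine PosSemidef.of_dotProduct_mulVec_nonneg ?_ ?_
  · simp [IsHermitian, conjTranspose_eq_transpose_of_trivial, hE]
  · intro v
    set δ := s / ((n : ℝ) + 1) with hδdef
    have hq : star v ⬝ᵥ ((s • (1 : Matrix (Fin n) (Fin n) ℝ) + E x) *ᵥ v)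
        = s * ∑ i, v i ^ 2 + ∑ i, ∑ j, v i * (E x i j * v j) := by
      rw [add_mulVec, dotProduct_add, smul_mulVec, one_mulVec, dotProduct_smul]
      simp [dotProduct, mulVec, Finset.mul_sum, pow_two]
    rw [hq]
    -- each cross term is at least `-δ (vᵢ² + vⱼ²) / 2`
    have hsum : ∑ i, ∑ j, (-(δ / 2) * (v i ^ 2 + v j ^ 2))
        ≤ ∑ i, ∑ j, v i * (E x i j * v j) := by
      refine Finset.sum_le_sum fun i _ => Finset.sum_le_sum fun j _ => ?_
      have h := abs_lt.1 (hx i j)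
      nlinarith [mul_nonneg (sub_nonneg.2 h.1.le) (sq_nonneg (v i + v j)),
        mul_nonneg (sub_nonneg.2 h.2.le) (sq_nonneg (v i - v j))]
    have heq : ∑ i, ∑ j, (-(δ / 2) * (v i ^ 2 + v j ^ 2)) = -(δ * n) * ∑ i, v i ^ 2 := by
      simp only [← Finset.mul_sum, Finset.sum_add_distrib, Finset.sum_const, Finset.card_univ,
        Fintype.card_fin, nsmul_eq_mul]
      ring
    have hδn : δ * n ≤ s := by
      rw [hδdef, div_mul_eq_mul_div, div_le_iff₀ (by positivity)]
      nlinarith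
    have hv : 0 ≤ ∑ i, v i ^ 2 := Finset.sum_nonneg fun i _ => sq_nonneg _
    nlinarith [mul_nonneg (sub_nonneg.2 hδn) hv]

end Perturbation

section Decoupling

-- Only the calculus below needs a norm on matrices; this one is submultiplicative for rectangular
-- matrices and induces the entrywise topology used elsewhere.
attribute [local instance] Matrix.linftyOpNormedAddCommGroup Matrix.linftyOpNormedSpace

lemma isBoundedBilinearMap_matrixMul (a b c : ℕ) :
    IsBoundedBilinearMap ℝ
      (fun q : Matrix (Fin a) (Fin b) ℝ × Matrix (Fin b) (Fin c) ℝ => q.1 * q.2) where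
  add_left _ _ _ := Matrix.add_mul _ _ _
  smul_left _ _ _ := Matrix.smul_mul _ _ _
  add_right _ _ _ := Matrix.mul_add _ _ _
  smul_right _ _ _ := Matrix.mul_smul _ _ _
  bound := ⟨1, one_pos, fun x y => by simpa using Matrix.linfty_opNorm_mul x y⟩

/-- For all small `ε`, the decoupling equation has a solution in any prescribed neighbourhood of
`D⁻¹ C`. -/
lemma exists_solution_near {nr nf : ℕ}
    (A : Matrix (Fin nr) (Fin nr) ℝ) (B : Matrix (Fin nr) (Fin nf) ℝ)
    (C : Matrix (Fin nf) (Fin nr) ℝ) (D : Matrix (Fin nf) (Fin nf) ℝ)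
    (hD : IsUnit D) {Q : ℝ × Matrix (Fin nf) (Fin nr) ℝ → Prop}
    (hQ : ∀ᶠ q in nhds ((0 : ℝ), D⁻¹ * C), Q q) :
    ∀ᶠ ε : ℝ in nhds 0, ∃ L : Matrix (Fin nf) (Fin nr) ℝ,
      D * L - C - ε • (L * (A - B * L)) = 0 ∧ Q (ε, L) := by
  have hdet : IsUnit D.det := (Matrix.isUnit_iff_isUnit_det D).1 hD
  set L₀ := D⁻¹ * C with hL₀
  have hDL : ∀ M : Matrix (Fin nf) (Fin nr) ℝ, D * (D⁻¹ * M) = M := fun M => by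
    rw [← Matrix.mul_assoc, Matrix.mul_nonsing_inv D hdet, Matrix.one_mul]
  let G : ℝ × Matrix (Fin nf) (Fin nr) ℝ → ℝ × Matrix (Fin nf) (Fin nr) ℝ :=
    fun q => (q.1, D * q.2 - C - q.1 • (q.2 * (A - B * q.2)))
  have hfst : HasStrictFDerivAt (fun q : ℝ × Matrix (Fin nf) (Fin nr) ℝ => q.1)
    (ContinuousLinearMap.fst ℝ _ _) (0, L₀) := hasStrictFDerivAt_fst
  have hsnd : HasStrictFDerivAt (fun q : ℝ × Matrix (Fin nf) (Fin nr) ℝ => q.2)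
    (ContinuousLinearMap.snd ℝ _ _) (0, L₀) := hasStrictFDerivAt_snd
  have hDq := ((isBoundedBilinearMap_matrixMul nf nf nr).hasStrictFDerivAt (D, L₀)).comp
    ((0 : ℝ), L₀) ((hasStrictFDerivAt_const D _).prodMk hsnd)
  have hBq := ((isBoundedBilinearMap_matrixMul nr nf nr).hasStrictFDerivAt (B, L₀)).comp
    ((0 : ℝ), L₀) ((hasStrictFDerivAt_const B _).prodMk hsnd)
  have hLq := ((isBoundedBilinearMap_matrixMul nf nr nr).hasStrictFDerivAt (L₀, A - B * L₀)).comp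
    ((0 : ℝ), L₀) (hsnd.prodMk (hBq.const_sub A))
  have hG : HasStrictFDerivAt G _ (0, L₀) :=
    hfst.prodMk ((hDq.sub_const C).sub (hfst.smul hLq))
  have hsurj := hG.map_nhds_eq_of_surj (by
    rw [LinearMap.range_eq_top]
    rintro ⟨e, K⟩
    refine ⟨(e, D⁻¹ * (K + e • (L₀ * (A - B * L₀)))), ?_⟩
    refine Prod.ext rfl ?_
    -- the derivative is `(e, H) ↦ (e, D H - e L₀ (A - B L₀))`
    change (D * (D⁻¹ * (K + e • (L₀ * (A - B * L₀)))) + (0 : Matrix (Fin nf) (Fin nf) ℝ) * L₀)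
      - ((0 : ℝ) • (_ : Matrix (Fin nf) (Fin nr) ℝ) + e • (L₀ * (A - B * L₀))) = K
    rw [hDL, Matrix.zero_mul, zero_smul]
    abel)
  have hG0 : G (0, L₀) = (0, 0) := by simp [G, hL₀, hDL]
  rw [hG0] at hsurj
  have him : G '' {q | Q q} ∈ Filter.map G (nhds ((0 : ℝ), L₀)) := Filter.image_mem_map hQ
  have him' : G '' {q | Q q} ∈ nhds ((0 : ℝ), (0 : Matrix (Fin nf) (Fin nr) ℝ)) :=
    (Filter.ext_iff.1 hsurj _).1 him
  have hcont : Filter.Tendsto (fun ε : ℝ => (ε, (0 : Matrix (Fin nf) (Fin nr) ℝ)))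
      (nhds 0) (nhds (0, 0)) := by
    have : Continuous (fun ε : ℝ => (ε, (0 : Matrix (Fin nf) (Fin nr) ℝ))) := by fun_prop
    exact this.tendsto 0
  filter_upwards [hcont him'] with ε hε
  obtain ⟨⟨e, L⟩, hq, hqe⟩ := hε
  obtain ⟨rfl, h2⟩ := Prod.mk.inj hqe
  exact ⟨L, h2, hq⟩

end Decoupling

/-- LTI corollary of the main theorem: under the slow and fast dominance
LMIs for `A₀ = A - BD⁻¹C` and `D`, for all sufficiently small `ε > 0` there exists a Chang
decoupling matrix `L` such that the decoupled system `diag(A - BL, ε⁻¹D + LB)` is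
`p`-dominant with respect to `diag(P_r, P_f)` with rate `λ_r`. -/
theorem lti_singular_perturbation_p_dominance
    {nr nf p : ℕ}
    (A : Matrix (Fin nr) (Fin nr) ℝ) (B : Matrix (Fin nr) (Fin nf) ℝ)
    (C : Matrix (Fin nf) (Fin nr) ℝ) (D : Matrix (Fin nf) (Fin nf) ℝ)
    (hD : IsUnit D)
    (Pr : Matrix (Fin nr) (Fin nr) ℝ) (hPr : Pr.IsHermitian)
    (hPrneg : Fintype.card {i : Fin nr // hPr.eigenvalues i < 0} = p)
    (hPrzero : Fintype.card {i : Fin nr // hPr.eigenvalues i = 0} = 0)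
    (hPrpos : Fintype.card {i : Fin nr // 0 < hPr.eigenvalues i} = nr - p)
    (Pf : Matrix (Fin nf) (Fin nf) ℝ) (hPf : Pf.PosDef)
    (lamr lamf σr σf : ℝ) (hlamr : 0 ≤ lamr) (hlamf : 0 ≤ lamf)
    (hσr : 0 < σr) (hσf : 0 < σf)
    (hLMIr : ((-(2 * lamr)) • Pr - σr • (1 : Matrix (Fin nr) (Fin nr) ℝ)
        - (Pr * (A - B * (D⁻¹ * C)) + (A - B * (D⁻¹ * C))ᵀ * Pr)).PosSemidef)
    (hLMIf : ((-(2 * lamf)) • Pf - σf • (1 : Matrix (Fin nf) (Fin nf) ℝ)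
        - (Pf * D + Dᵀ * Pf)).PosSemidef) :
    ∃ εStar σ : ℝ, 0 < εStar ∧ 0 < σ ∧
      ∀ ε : ℝ, ε ∈ Set.Ioo 0 εStar →
        ∃ L : Matrix (Fin nf) (Fin nr) ℝ,
          D * L - C - ε • (L * (A - B * L)) = 0 ∧
          ((-(2 * lamr)) • Pr - σ • (1 : Matrix (Fin nr) (Fin nr) ℝ)
            - (Pr * (A - B * L) + (A - B * L)ᵀ * Pr)).PosSemidef ∧
          ((-(2 * lamr)) • Pf - σ • (1 : Matrix (Fin nf) (Fin nf) ℝ)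
            - (Pf * (ε⁻¹ • D + L * B) + (ε⁻¹ • D + L * B)ᵀ * Pf)).PosSemidef := by
  have hPrT : Prᵀ = Pr := by
    rw [← conjTranspose_eq_transpose_of_trivial]; exact hPr
  have hPfT : Pfᵀ = Pf := by
    rw [← conjTranspose_eq_transpose_of_trivial]; exact hPf.isHermitian
  let Er : ℝ × Matrix (Fin nf) (Fin nr) ℝ → Matrix (Fin nr) (Fin nr) ℝ := fun q =>
    Pr * (B * (q.2 - D⁻¹ * C)) + (B * (q.2 - D⁻¹ * C))ᵀ * Pr
  let Ef : ℝ × Matrix (Fin nf) (Fin nr) ℝ → Matrix (Fin nf) (Fin nf) ℝ := fun q =>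
    -(q.1 • ((σr / 2) • (1 : Matrix (Fin nf) (Fin nf) ℝ) + (2 * lamr) • Pf
      + (Pf * (q.2 * B) + (q.2 * B)ᵀ * Pf)))
  have hErT : ∀ q, (Er q)ᵀ = Er q := fun q => by
    simp only [Er, transpose_add, transpose_mul, transpose_transpose, hPrT]
    rw [add_comm]
  have hEfT : ∀ q, (Ef q)ᵀ = Ef q := fun q => by
    simp only [Ef, transpose_neg, transpose_smul, transpose_add, transpose_one, transpose_mul,
      transpose_transpose, hPfT]
    rw [add_comm (Pf * _)]
  have hErc : Continuous Er := by fun_prop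
  have hEfc : Continuous Ef := by fun_prop
  have hEr0 : Filter.Tendsto Er (nhds (0, D⁻¹ * C)) (nhds 0) := by
    have h := hErc.tendsto (0, D⁻¹ * C)
    simpa [Er] using h
  have hEf0 : Filter.Tendsto Ef (nhds (0, D⁻¹ * C)) (nhds 0) := by
    have h := hEfc.tendsto (0, D⁻¹ * C)
    simpa [Ef] using h
  have hev := exists_solution_near A B C D hD
    ((eventually_posSemidef Er hErT hEr0 (half_pos hσr)).and
      (eventually_posSemidef Ef hEfT hEf0 hσf))
  obtain ⟨δ, hδ, hball⟩ := Metric.eventually_nhds_iff.1 hev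
  refine ⟨δ, σr / 2, hδ, half_pos hσr, fun ε hε => ?_⟩
  obtain ⟨L, hL, hr, hf⟩ := hball (y := ε) (by
    rw [Real.dist_eq, sub_zero, abs_of_pos hε.1]; exact hε.2)
  refine ⟨L, hL, ?_, ?_⟩
  · convert hLMIr.add hr using 1
    simp only [Er, Matrix.mul_sub, transpose_sub, Matrix.sub_mul]
    module
  -- the fast inequality is `ε⁻¹` times hypothesis + `2 lamf Pf` + (`σf I` + perturbation)
  · convert ((hLMIf.add (hPf.posSemidef.smul (by positivity : 0 ≤ 2 * lamf))).add hf).smul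
      (inv_pos.2 hε.1).le using 1
    have hne : ε ≠ 0 := hε.1.ne'
    simp only [Ef, Matrix.mul_add, transpose_add, Matrix.add_mul, transpose_smul, Matrix.mul_smul,
      Matrix.smul_mul]
    match_scalars <;> field_simp <;> ring
end

section
/- Consider the singularly perturbed linear time-invariant system ẋ = Ax + Bz, εż = Cx + Dz with A ∈ ℝ^{n_r×n_r}, B ∈ ℝ^{n_r×n_f}, C ∈ ℝ^{n_f×n_r}, D ∈ ℝ^{n_f×n_f}, D invertible, and A₀ := A - BD⁻¹C. Suppose there exist symmetric positive definite matrices P_r ∈ ℝ^{n_r×n_r} and P_f ∈ ℝ^{n_f×n_f}, rates λ_r, λ_f ≥ 0, and σ_r, σ_f > 0 such that P_r A₀ + A₀ᵀP_r ⪯ -2λ_r P_r - σ_r I_{n_r} and P_f D + DᵀP_f ⪯ -2λ_f P_f - σ_f I_{n_f}. Then there exists ε* > 0 such that for every ε ∈ (0, ε*) the full system matrix M_ε := [[A, B], [ε⁻¹C, ε⁻¹D]] ∈ ℝ^{(n_r+n_f)×(n_r+n_f)} is Hurwitz, i.e., every eigenvalue of M_ε has negative real part. -/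
open Matrix

/-!
The fast variable is replaced by its deviation `y = z + D⁻¹ C x` from the slow manifold. In the
coordinates `(x, y)` the system reads `ẋ = A₀ x + B y`, `ẏ = ε⁻¹ D y + D⁻¹ C (A₀ x + B y)` with
`A₀ = A - B D⁻¹ C`, so only the stable term `D y` carries the large factor `ε⁻¹`.

Along these dynamics the Lyapunov function `V = xᵀ P_r x + yᵀ P_f y` has half-derivative
at most `-(σ_r / 2) |x|² - (σ_f / (2 ε)) |y|²` plus cross terms that do not depend on `ε`. Young's
inequality (`exists_dotProduct_mulVec_le`) bounds the cross terms by `(σ_r / 4) |x|² + K |y|²`, which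
is absorbed once `ε` is small (`exists_lyapunov_decrease`).

For an eigenvalue `μ = a + i b` with eigenvector `u + i v`, adding the half-derivatives of `V` at
`u` and at `v` gives `a (V u + V v)`: the terms in `b` cancel because `P_r` and `P_f` are
symmetric. The sum is negative and `V` is nonnegative, hence `a < 0`.
-/

/-- Young's inequality for the bilinear form of a matrix: the weight of `|x|²` can be made as small
as desired at the expense of the weight of `|y|²`. -/
theorem exists_dotProduct_mulVec_le {m n : Type*} [Fintype m] [Fintype n] (G : Matrix m n ℝ)
    {s : ℝ} (hs : 0 < s) :
    ∃ K : ℝ, 0 ≤ K ∧ ∀ (x : m → ℝ) (y : n → ℝ), x ⬝ᵥ (G *ᵥ y) ≤ s * (x ⬝ᵥ x) + K * (y ⬝ᵥ y) := by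
  refine ⟨(4 * s)⁻¹ * ∑ i, ∑ j, G i j ^ 2, by positivity, fun x y => ?_⟩
  have h1 : ∀ i, x i * (G *ᵥ y) i ≤ s * (x i * x i) + (4 * s)⁻¹ * (G *ᵥ y) i ^ 2 := fun i => by
    have h : s * (x i * x i) + (4 * s)⁻¹ * (G *ᵥ y) i ^ 2 - x i * (G *ᵥ y) i
        = s * (x i - (2 * s)⁻¹ * (G *ᵥ y) i) ^ 2 := by
      field_simp
      ring
    have : 0 ≤ s * (x i - (2 * s)⁻¹ * (G *ᵥ y) i) ^ 2 := by positivity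
    linarith
  have h2 : ∀ i, (G *ᵥ y) i ^ 2 ≤ (∑ j, G i j ^ 2) * (y ⬝ᵥ y) := fun i => by
    have := Finset.sum_mul_sq_le_sq_mul_sq Finset.univ (fun j => G i j) y
    simpa [Matrix.mulVec, dotProduct, sq] using this
  calc x ⬝ᵥ (G *ᵥ y) ≤ ∑ i, (s * (x i * x i) + (4 * s)⁻¹ * ((∑ j, G i j ^ 2) * (y ⬝ᵥ y))) :=
        Finset.sum_le_sum fun i _ => (h1 i).trans (by gcongr; exact h2 i)
    _ = _ := by
        rw [Finset.sum_add_distrib, ← Finset.mul_sum, ← Finset.mul_sum, ← Finset.sum_mul, mul_assoc]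
        rfl

/-- A dominance inequality with nonnegative rate bounds the half-derivative of `xᵀ P x` along
`ẋ = F x`. -/
theorem dotProduct_mulVec_le_of_lmi {n : Type*} [Fintype n] [DecidableEq n] {P F : Matrix n n ℝ}
    (hP : P.PosDef) {lam s : ℝ} (hlam : 0 ≤ lam)
    (h : ((-(2 * lam)) • P - s • (1 : Matrix n n ℝ) - (P * F + Fᵀ * P)).PosSemidef) (x : n → ℝ) :
    x ⬝ᵥ (P *ᵥ (F *ᵥ x)) ≤ -(s / 2) * (x ⬝ᵥ x) := by
  have h1 := h.dotProduct_mulVec_nonneg x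
  have h2 := hP.posSemidef.dotProduct_mulVec_nonneg x
  have hPt : Pᵀ = P := by simpa using hP.isHermitian.eq
  have h3 : x ⬝ᵥ (Fᵀ *ᵥ (P *ᵥ x)) = x ⬝ᵥ (P *ᵥ (F *ᵥ x)) := by
    rw [dotProduct_mulVec, vecMul_transpose, dotProduct_mulVec, ← mulVec_transpose, hPt,
      dotProduct_comm]
  simp only [star_trivial, sub_mulVec, add_mulVec, smul_mulVec, one_mulVec, dotProduct_sub,
    dotProduct_add, dotProduct_smul, smul_eq_mul, ← mulVec_mulVec, h3] at h1 h2
  nlinarith [mul_nonneg hlam h2]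

/-- For small `ε` the half-derivative of `xᵀ P_r x + yᵀ P_f y` along `ẋ = F x + B y`,
`ẏ = ε⁻¹ D y + E (F x + B y)` is negative definite, uniformly in `ε`. -/
theorem exists_lyapunov_decrease {m n : Type*} [Fintype m] [Fintype n]
    (F : Matrix m m ℝ) (B : Matrix m n ℝ) (E : Matrix n m ℝ) (D : Matrix n n ℝ)
    (Pr : Matrix m m ℝ) (Pf : Matrix n n ℝ) {s t : ℝ} (hs : 0 < s) (ht : 0 < t)
    (hr : ∀ x, x ⬝ᵥ (Pr *ᵥ (F *ᵥ x)) ≤ -(s / 2) * (x ⬝ᵥ x))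
    (hf : ∀ y, y ⬝ᵥ (Pf *ᵥ (D *ᵥ y)) ≤ -(t / 2) * (y ⬝ᵥ y)) :
    ∃ εStar : ℝ, 0 < εStar ∧ ∀ ε ∈ Set.Ioo 0 εStar, ∀ (x : m → ℝ) (y : n → ℝ),
      x ⬝ᵥ (Pr *ᵥ (F *ᵥ x + B *ᵥ y))
        + y ⬝ᵥ (Pf *ᵥ (ε⁻¹ • (D *ᵥ y) + E *ᵥ (F *ᵥ x + B *ᵥ y)))
        ≤ -(s / 4) * (x ⬝ᵥ x) - y ⬝ᵥ y := by
  obtain ⟨K₁, hK₁, h₁⟩ := exists_dotProduct_mulVec_le (Pr * B + (Pf * E * F)ᵀ)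
    (show 0 < s / 4 by positivity)
  obtain ⟨K₂, hK₂, h₂⟩ := exists_dotProduct_mulVec_le (Pf * E * B) one_pos
  refine ⟨t / (2 * (K₁ + K₂ + 2)), by positivity, fun ε ⟨hε, hε'⟩ x y => ?_⟩
  have h₁ := h₁ x y
  have h₂ := h₂ y y
  have hyy : 0 ≤ y ⬝ᵥ y := Finset.sum_nonneg fun i _ => mul_self_nonneg (y i)
  have hbig : K₁ + K₂ + 2 ≤ ε⁻¹ * (t / 2) := by
    rw [lt_div_iff₀ (by positivity)] at hε'
    rw [inv_mul_eq_div, le_div_iff₀ hε]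
    linarith
  have hfast : ε⁻¹ * (y ⬝ᵥ (Pf *ᵥ (D *ᵥ y))) ≤ -(K₁ + K₂ + 2) * (y ⬝ᵥ y) := by
    have := mul_le_mul_of_nonneg_left (hf y) (inv_pos.2 hε).le
    nlinarith [mul_le_mul_of_nonneg_right hbig hyy]
  have hT : x ⬝ᵥ ((Pf * E * F)ᵀ *ᵥ y) = y ⬝ᵥ (Pf *ᵥ (E *ᵥ (F *ᵥ x))) := by
    rw [dotProduct_mulVec, vecMul_transpose, dotProduct_comm, mulVec_mulVec, mulVec_mulVec]
  have hslow := hr x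
  simp only [add_mulVec, dotProduct_add, hT, ← mulVec_mulVec] at h₁ h₂
  simp only [mulVec_add, mulVec_smul, dotProduct_add, dotProduct_smul, smul_eq_mul]
  linarith

/-- The real and imaginary parts of a complex eigenvector span a real invariant subspace. -/
theorem exists_re_im_eigenvector {n : Type*} [Fintype n] [DecidableEq n] {M : Matrix n n ℝ} {μ : ℂ}
    (hμ : μ ∈ spectrum ℂ (M.map (Complex.ofReal : ℝ → ℂ))) :
    ∃ u v : n → ℝ, (u ≠ 0 ∨ v ≠ 0) ∧ M *ᵥ u = μ.re • u - μ.im • v ∧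
      M *ᵥ v = μ.re • v + μ.im • u := by
  rw [← Matrix.spectrum_toLin', ← Module.End.hasEigenvalue_iff_mem_spectrum] at hμ
  obtain ⟨w, hw⟩ := hμ.exists_hasEigenvector
  have hw1 : (M.map (Complex.ofReal : ℝ → ℂ)) *ᵥ w = μ • w := by simpa using hw.apply_eq_smul
  refine ⟨fun i => (w i).re, fun i => (w i).im, ?_, ?_, ?_⟩
  · by_contra! h
    exact hw.2 (funext fun i => Complex.ext (congrFun h.1 i) (congrFun h.2 i))
  · ext i
    simpa [Matrix.mulVec, dotProduct] using congrArg Complex.re (congrFun hw1 i)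
  · ext i
    simpa [Matrix.mulVec, dotProduct] using congrArg Complex.im (congrFun hw1 i)

/-- For symmetric `P`, the sum of `xᵀ P ẋ` over the real and imaginary part of a complex eigenvector
sees only the real part `a` of the eigenvalue. -/
theorem dotProduct_mulVec_re_add_im {n : Type*} [Fintype n] {P : Matrix n n ℝ} (hP : Pᵀ = P)
    (u v : n → ℝ) (a b : ℝ) :
    u ⬝ᵥ (P *ᵥ (a • u - b • v)) + v ⬝ᵥ (P *ᵥ (a • v + b • u))
      = a * (u ⬝ᵥ (P *ᵥ u) + v ⬝ᵥ (P *ᵥ v)) := by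
  have h : v ⬝ᵥ (P *ᵥ u) = u ⬝ᵥ (P *ᵥ v) := by
    rw [dotProduct_mulVec, ← mulVec_transpose, hP, dotProduct_comm]
  simp only [mulVec_add, mulVec_sub, mulVec_smul, dotProduct_add, dotProduct_sub, dotProduct_smul,
    smul_eq_mul, h]
  ring

/-- (p = 0 case.) Under positive definite `P_r, P_f` and the slow/fast
dominance LMIs, for all sufficiently small `ε > 0` the full system matrix
`M_ε = [[A, B], [ε⁻¹C, ε⁻¹D]]` is Hurwitz. -/
theorem lti_singular_perturbation_hurwitz
    {nr nf : ℕ}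
    (A : Matrix (Fin nr) (Fin nr) ℝ) (B : Matrix (Fin nr) (Fin nf) ℝ)
    (C : Matrix (Fin nf) (Fin nr) ℝ) (D : Matrix (Fin nf) (Fin nf) ℝ)
    (hD : IsUnit D)
    (Pr : Matrix (Fin nr) (Fin nr) ℝ) (hPr : Pr.PosDef)
    (Pf : Matrix (Fin nf) (Fin nf) ℝ) (hPf : Pf.PosDef)
    (lamr lamf σr σf : ℝ) (hlamr : 0 ≤ lamr) (hlamf : 0 ≤ lamf)
    (hσr : 0 < σr) (hσf : 0 < σf)
    (hLMIr : ((-(2 * lamr)) • Pr - σr • (1 : Matrix (Fin nr) (Fin nr) ℝ)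
        - (Pr * (A - B * (D⁻¹ * C)) + (A - B * (D⁻¹ * C))ᵀ * Pr)).PosSemidef)
    (hLMIf : ((-(2 * lamf)) • Pf - σf • (1 : Matrix (Fin nf) (Fin nf) ℝ)
        - (Pf * D + Dᵀ * Pf)).PosSemidef) :
    ∃ εStar : ℝ, 0 < εStar ∧
      ∀ ε : ℝ, ε ∈ Set.Ioo 0 εStar →
        ∀ μ : ℂ, μ ∈ spectrum ℂ
            ((Matrix.fromBlocks A B (ε⁻¹ • C) (ε⁻¹ • D)).map (Complex.ofReal : ℝ → ℂ)) →
          μ.re < 0 := by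
  have hDD : D * D⁻¹ = 1 := Matrix.mul_nonsing_inv D ((Matrix.isUnit_iff_isUnit_det D).1 hD)
  set E := D⁻¹ * C with hE
  have hDE : D * E = C := by rw [hE, ← Matrix.mul_assoc, hDD, Matrix.one_mul]
  obtain ⟨εStar, hpos, hdec⟩ := exists_lyapunov_decrease (A - B * E) B E D Pr Pf hσr hσf
    (dotProduct_mulVec_le_of_lmi hPr hlamr hLMIr) (dotProduct_mulVec_le_of_lmi hPf hlamf hLMIf)
  refine ⟨εStar, hpos, fun ε hε μ hμ => ?_⟩
  obtain ⟨u, v, huv, hu, hv⟩ := exists_re_im_eigenvector hμ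
  -- The dynamics in the coordinates `(x, z + E x)`, for an arbitrary velocity `p` of `w = (x, z)`.
  have key : ∀ w p : Fin nr ⊕ Fin nf → ℝ, fromBlocks A B (ε⁻¹ • C) (ε⁻¹ • D) *ᵥ w = p →
      (A - B * E) *ᵥ (w ∘ Sum.inl) + B *ᵥ (w ∘ Sum.inr + E *ᵥ (w ∘ Sum.inl)) = p ∘ Sum.inl ∧
      ε⁻¹ • (D *ᵥ (w ∘ Sum.inr + E *ᵥ (w ∘ Sum.inl))) = p ∘ Sum.inr := by
    rintro w p rfl
    rw [fromBlocks_mulVec]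
    constructor
    · rw [Sum.elim_comp_inl, sub_mulVec, mulVec_add, ← mulVec_mulVec]
      abel
    · rw [Sum.elim_comp_inr, mulVec_add, mulVec_mulVec, hDE, smul_mulVec, smul_mulVec, smul_add,
        add_comm]
  obtain ⟨hu1, hu2⟩ := key u _ hu
  obtain ⟨hv1, hv2⟩ := key v _ hv
  have du := hdec ε hε (u ∘ Sum.inl) (u ∘ Sum.inr + E *ᵥ (u ∘ Sum.inl))
  have dv := hdec ε hε (v ∘ Sum.inl) (v ∘ Sum.inr + E *ᵥ (v ∘ Sum.inl))
  rw [hu1, hu2] at du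
  rw [hv1, hv2] at dv
  set xu := u ∘ Sum.inl with hxu
  set xv := v ∘ Sum.inl with hxv
  set yu := u ∘ Sum.inr + E *ᵥ xu with hyu
  set yv := v ∘ Sum.inr + E *ᵥ xv with hyv
  have e1 : (μ.re • u - μ.im • v) ∘ Sum.inl = μ.re • xu - μ.im • xv := rfl
  have e2 : (μ.re • v + μ.im • u) ∘ Sum.inl = μ.re • xv + μ.im • xu := rfl
  have e3 : (μ.re • u - μ.im • v) ∘ Sum.inr + E *ᵥ (μ.re • xu - μ.im • xv)
      = μ.re • yu - μ.im • yv := by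
    have : (μ.re • u - μ.im • v) ∘ Sum.inr = μ.re • (u ∘ Sum.inr) - μ.im • (v ∘ Sum.inr) := rfl
    rw [this, hyu, hyv, mulVec_sub, mulVec_smul, mulVec_smul]
    module
  have e4 : (μ.re • v + μ.im • u) ∘ Sum.inr + E *ᵥ (μ.re • xv + μ.im • xu)
      = μ.re • yv + μ.im • yu := by
    have : (μ.re • v + μ.im • u) ∘ Sum.inr = μ.re • (v ∘ Sum.inr) + μ.im • (u ∘ Sum.inr) := rfl
    rw [this, hyu, hyv, mulVec_add, mulVec_smul, mulVec_smul]
    module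
  rw [e1, e3] at du
  rw [e2, e4] at dv
  have sr := dotProduct_mulVec_re_add_im (by simpa using hPr.isHermitian.eq : Prᵀ = Pr)
    xu xv μ.re μ.im
  have sf := dotProduct_mulVec_re_add_im (by simpa using hPf.isHermitian.eq : Pfᵀ = Pf)
    yu yv μ.re μ.im
  have nn : ∀ {k : ℕ} (x : Fin k → ℝ), 0 ≤ x ⬝ᵥ x := fun x =>
    Finset.sum_nonneg fun i _ => mul_self_nonneg (x i)
  have hr0 : ∀ x, 0 ≤ x ⬝ᵥ (Pr *ᵥ x) := fun x => by
    simpa using hPr.posSemidef.dotProduct_mulVec_nonneg x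
  have hf0 : ∀ y, 0 ≤ y ⬝ᵥ (Pf *ᵥ y) := fun y => by
    simpa using hPf.posSemidef.dotProduct_mulVec_nonneg y
  -- If `a ≥ 0`, the Lyapunov estimate forces `|x|² = |y|² = 0` for both parts of the eigenvector.
  by_contra! ha
  have hV := mul_nonneg ha (add_nonneg (add_nonneg (hr0 xu) (hr0 xv))
    (add_nonneg (hf0 yu) (hf0 yv)))
  have m1 := mul_nonneg hσr.le (nn xu)
  have m2 := mul_nonneg hσr.le (nn xv)
  have zero : ∀ w : Fin nr ⊕ Fin nf → ℝ, σr * (w ∘ Sum.inl ⬝ᵥ w ∘ Sum.inl) ≤ 0 →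
      (w ∘ Sum.inr + E *ᵥ (w ∘ Sum.inl)) ⬝ᵥ (w ∘ Sum.inr + E *ᵥ (w ∘ Sum.inl)) ≤ 0 → w = 0 := by
    intro w h1 h2
    have hx : w ∘ Sum.inl = 0 :=
      dotProduct_self_eq_zero.1 (le_antisymm (nonpos_of_mul_nonpos_right h1 hσr) (nn _))
    have hy := dotProduct_self_eq_zero.1 (le_antisymm h2 (nn _))
    rw [hx, mulVec_zero, add_zero] at hy
    ext (i | i)
    · exact congrFun hx i
    · exact congrFun hy i
  have n1 := nn yu
  have n2 := nn yv
  rcases huv with h | h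
  · exact h (zero u (by linarith) (by linarith))
  · exact h (zero v (by linarith) (by linarith))
end
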